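/- Let G be a finite abelian group with exp(G) = n ≥ 5 and r(G) ≤ n − 3. Then every non-half-factorial LCN-set G₀ ⊆ G satisfies min Δ(G₀) ≤ n − 4 (i.e. m(G) ≤ n − 4). -/

import Mathlib

open Multiset

section Defs

variable {G : Type*} [AddCommGroup G]

/-- `S` is a zero-sum sequence over `G₀`: a multiset with entries in `G₀` and sum `0`. -/
def IsZeroSumSeq (G₀ : Set G) (S : Multiset G) : Prop :=
  (∀ x ∈ S, x ∈ G₀) ∧ S.sum = 0

/-- `S` is an atom over `G₀`: a nonempty zero-sum sequence over `G₀` that is not the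
union of two nonempty zero-sum sequences over `G₀`. -/
def IsAtomSeq (G₀ : Set G) (S : Multiset G) : Prop :=
  IsZeroSumSeq G₀ S ∧ S ≠ 0 ∧
    ∀ A B : Multiset G, IsZeroSumSeq G₀ A → IsZeroSumSeq G₀ B →
      A ≠ 0 → B ≠ 0 → S ≠ A + B

/-- The set of lengths of `B`: all `k` such that `B` is a union of `k` atoms over `G₀`. -/
def LengthSet (G₀ : Set G) (B : Multiset G) : Set ℕ :=
  {k | ∃ l : Multiset (Multiset G), Multiset.card l = k ∧
      (∀ A ∈ l, IsAtomSeq G₀ A) ∧ l.sum = B}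

/-- The set of successive distances of a set of naturals. -/
def DeltaOf (L : Set ℕ) : Set ℕ :=
  {d | ∃ x ∈ L, ∃ y ∈ L, x < y ∧ y - x = d ∧ ∀ z ∈ L, ¬(x < z ∧ z < y)}

/-- The set of distances `Δ(G₀)`. -/
def DeltaSet (G₀ : Set G) : Set ℕ :=
  {d | ∃ B : Multiset G, IsZeroSumSeq G₀ B ∧ B ≠ 0 ∧ d ∈ DeltaOf (LengthSet G₀ B)}

/-- `G₀` is half-factorial if `Δ(G₀) = ∅`. -/
def IsHalfFactorialSet (G₀ : Set G) : Prop := DeltaSet G₀ = ∅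

/-- `G₀` is minimal non-half-factorial if `Δ(G₀) ≠ ∅` and every proper subset is
half-factorial. -/
def IsMinNonHalfFactorial (G₀ : Set G) : Prop :=
  (DeltaSet G₀).Nonempty ∧ ∀ G₁ : Set G, G₁ ⊂ G₀ → DeltaSet G₁ = ∅

/-- The cross number `k(S) = Σ 1/ord(g)` of a multiset over `G`. -/
noncomputable def crossNumber (S : Multiset G) : ℚ :=
  (S.map (fun g => ((addOrderOf g : ℚ))⁻¹)).sum

/-- `G₀` is an LCN-set if every atom over `G₀` has cross number at least 1. -/
def IsLCNSet (G₀ : Set G) : Prop :=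
  ∀ U : Multiset G, IsAtomSeq G₀ U → 1 ≤ crossNumber U

/-- A subset of `G \ {0}` is independent if any integral linear relation on its elements
has all summands zero. -/
def IsIndependentSet (E : Set G) : Prop :=
  (0 : G) ∉ E ∧ ∀ s : Finset G, ↑s ⊆ E → ∀ f : G → ℤ,
    (∑ e ∈ s, f e • e) = 0 → ∀ e ∈ s, f e • e = 0

/-- `d` is a greatest common divisor of the set `S` of naturals. -/
def IsSetGcd (S : Set ℕ) (d : ℕ) : Prop :=
  (∀ s ∈ S, d ∣ s) ∧ ∀ e : ℕ, (∀ s ∈ S, e ∣ s) → e ∣ d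

end Defs

/-- The set of minimal distances `Δ*(G)`. -/
def DeltaStar (G : Type*) [AddCommGroup G] : Set ℕ :=
  {d | ∃ G₀ : Set G, (DeltaSet G₀).Nonempty ∧ d = sInf (DeltaSet G₀)}

/-- The `p`-rank of a finite abelian group: `log_p` of the order of the `p`-torsion
subgroup `{x | p • x = 0}`. -/
noncomputable def pRank (G : Type*) [AddCommGroup G] (p : ℕ) : ℕ :=
  Nat.log p (Nat.card {x : G // p • x = 0})

/-- The rank of a finite abelian group: the maximum of the `p`-ranks over all primes. -/
noncomputable def rankG (G : Type*) [AddCommGroup G] : ℕ :=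
  sSup {r : ℕ | ∃ p : ℕ, p.Prime ∧ r = pRank G p}

/-!
Call a zero-sum sequence *unit* if it is a product of atoms of cross number one. If `W` is an atom
of cross number `≠ 1` whose support `S` is as small as possible, then every zero-sum sequence over
`S` avoiding some element of `S` is unit. Two estimates bound `min Δ(S)`.

* `W` divides `∏ g ^ ord g` over `g ∈ S`, which gives a distance at most `|S| - 2`.
* If `Y` is not unit but `Y * h ^ ord h` is, then a minimal part of a unit factorization of
  `Y * h ^ ord h` still divisible by `h ^ ord h` has at most `(ord h + 1) / 2` atoms, each of them
  containing `h` at least twice. This gives a distance at most `(ord h - 3) / 2`.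

Such `Y` and `h` exist as soon as `W` times some unit sequence is unit. If `|S| ≥ r(G) + 2`, this
holds: for each prime `p` there is a zero-sum sequence `Z` over `S` avoiding one element and
containing some `h ∈ S` with multiplicity `m` prime to `p`; eliminating `h` between `W ^ m` and a
power of `Z` shows that `W ^ m` times a unit sequence is unit, and such `m` have gcd one.
-/

section Atoms

variable {G : Type*} [AddCommGroup G] {S T : Set G} {A B W : Multiset G}

/-- The monoid `B(S)` of zero-sum sequences over `S`, as a submonoid of all multisets over `G`. -/
def zeroSumMonoid (S : Set G) : AddSubmonoid (Multiset G) where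
  carrier := {B | IsZeroSumSeq S B}
  zero_mem' := by simp [IsZeroSumSeq]
  add_mem' hA hB :=
    ⟨fun x hx => (Multiset.mem_add.1 hx).elim (hA.1 x) (hB.1 x), by simp [hA.2, hB.2]⟩

lemma IsZeroSumSeq.mono (hST : S ⊆ T) (hB : IsZeroSumSeq S B) : IsZeroSumSeq T B :=
  ⟨fun x hx => hST (hB.1 x hx), hB.2⟩

lemma IsZeroSumSeq.of_add_left (hAB : IsZeroSumSeq S (A + B)) (hA : A.sum = 0) :
    IsZeroSumSeq S B :=
  ⟨fun x hx => hAB.1 x (Multiset.mem_add.2 (Or.inr hx)), by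
    simpa only [Multiset.sum_add, hA, zero_add] using hAB.2⟩

lemma IsAtomSeq.eq_of_le (hW : IsAtomSeq S W) (hA : IsZeroSumSeq S A) (hA0 : A ≠ 0)
    (hAW : A ≤ W) : A = W := by
  obtain ⟨C, rfl⟩ := Multiset.le_iff_exists_add.1 hAW
  by_contra hne
  exact hW.2.2 A C hA (hW.1.of_add_left hA.2) hA0 (fun hC => hne (by simp [hC])) rfl

lemma isAtomSeq_iff_of_subset (hST : S ⊆ T) :
    IsAtomSeq S A ↔ IsAtomSeq T A ∧ ∀ x ∈ A, x ∈ S := by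
  constructor
  · refine fun hA => ⟨⟨hA.1.mono hST, hA.2.1, ?_⟩, hA.1.1⟩
    rintro B C hB - hB0 hC0 rfl
    have hBS : IsZeroSumSeq S B := ⟨fun x hx => hA.1.1 x (by simp [hx]), hB.2⟩
    exact hA.2.2 B C hBS (hA.1.of_add_left hB.2) hB0 hC0 rfl
  · exact fun ⟨hA, hAS⟩ => ⟨⟨hAS, hA.1.2⟩, hA.2.1, fun B C hB hC =>
      hA.2.2 B C (hB.mono hST) (hC.mono hST)⟩

lemma IsZeroSumSeq.exists_atoms_sum_eq (hB : IsZeroSumSeq S B) :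
    ∃ z : Multiset (Multiset G), (∀ A ∈ z, IsAtomSeq S A) ∧ z.sum = B := by
  induction B using Multiset.strongInductionOn with
  | ih B ih =>
    by_cases hB0 : B = 0
    · exact ⟨0, by simp, by simp [hB0]⟩
    by_cases hatom : IsAtomSeq S B
    · exact ⟨{B}, by simpa using hatom, by simp⟩
    obtain ⟨A, C, hA, hC, hA0, hC0, rfl⟩ : ∃ A C, IsZeroSumSeq S A ∧ IsZeroSumSeq S C ∧
        A ≠ 0 ∧ C ≠ 0 ∧ B = A + C := by
      by_contra! hsplit
      exact hatom ⟨hB, hB0, hsplit⟩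
    obtain ⟨zA, hzA, rfl⟩ := ih A (lt_add_of_pos_right A (pos_iff_ne_zero.2 hC0)) hA
    obtain ⟨zC, hzC, rfl⟩ := ih C (lt_add_of_pos_left C (pos_iff_ne_zero.2 hA0)) hC
    exact ⟨zA + zC, fun A hA => (Multiset.mem_add.1 hA).elim (hzA A) (hzC A), Multiset.sum_add ..⟩

end Atoms

section Distances

variable {G : Type*} [AddCommGroup G] {S T : Set G} {B : Multiset G}

lemma lengthSet_eq_of_subset (hST : S ⊆ T) (hB : ∀ x ∈ B, x ∈ S) :
    LengthSet S B = LengthSet T B := by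
  ext k
  constructor
  · rintro ⟨l, hl, hatom, hsum⟩
    exact ⟨l, hl, fun A hA => ((isAtomSeq_iff_of_subset hST).1 (hatom A hA)).1, hsum⟩
  · rintro ⟨l, hl, hatom, rfl⟩
    exact ⟨l, hl, fun A hA => (isAtomSeq_iff_of_subset hST).2 ⟨hatom A hA, fun x hx =>
      hB x (Multiset.mem_of_le (Multiset.le_sum_of_mem hA) hx)⟩, rfl⟩

lemma deltaSet_mono (hST : S ⊆ T) : DeltaSet S ⊆ DeltaSet T := by
  rintro d ⟨B, hB, hB0, hd⟩
  exact ⟨B, hB.mono hST, hB0, lengthSet_eq_of_subset hST hB.1 ▸ hd⟩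

lemma exists_mem_deltaSet_le_sub {a b : ℕ} (ha : a ∈ LengthSet S B) (hb : b ∈ LengthSet S B)
    (hab : a < b) : ∃ d ∈ DeltaSet S, d ≤ b - a := by
  classical
  have hex : ∃ y, y ∈ LengthSet S B ∧ a < y := ⟨b, hb, hab⟩
  obtain ⟨hy, hay⟩ := Nat.find_spec hex
  obtain ⟨l, hlcard, hl, rfl⟩ := id hb
  have hzero : IsZeroSumSeq S l.sum :=
    (zeroSumMonoid S).multiset_sum_mem l fun A hA => (hl A hA).1
  have hne : l.sum ≠ 0 := by
    intro h0
    obtain ⟨A, hA⟩ := Multiset.card_pos_iff_exists_mem.1 (hlcard ▸ pos_of_gt hab)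
    exact (hl A hA).2.1 (Multiset.sum_eq_zero_iff.1 h0 A hA)
  refine ⟨Nat.find hex - a, ⟨l.sum, hzero, hne, a, ha, _, hy, hay, rfl, ?_⟩,
    Nat.sub_le_sub_right (Nat.find_min' hex ⟨hb, hab⟩) a⟩
  exact fun z hz hz' => Nat.find_min hex hz'.2 ⟨hz, hz'.1⟩

end Distances

section CrossNumber

variable {G : Type*} [AddCommGroup G] {S T : Set G} {B W : Multiset G}
  {l z : Multiset (Multiset G)}

lemma crossNumber_sum (l : Multiset (Multiset G)) :
    crossNumber l.sum = (l.map crossNumber).sum := by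
  induction l using Multiset.induction_on with
  | empty => simp [crossNumber]
  | cons A l ih => simp [crossNumber, ← ih]

lemma crossNumber_sum_eq_card (hl : ∀ A ∈ l, crossNumber A = 1) :
    crossNumber l.sum = Multiset.card l := by
  simp [crossNumber_sum, Multiset.map_congr rfl hl]

lemma IsLCNSet.mono (hST : S ⊆ T) (hT : IsLCNSet T) : IsLCNSet S :=
  fun U hU => hT U ((isAtomSeq_iff_of_subset hST).1 hU).1

lemma IsLCNSet.card_lt_crossNumber_sum (hS : IsLCNSet S) (hz : ∀ A ∈ z, IsAtomSeq S A)
    (hne : ∃ A ∈ z, crossNumber A ≠ 1) : (Multiset.card z : ℚ) < crossNumber z.sum := by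
  have hge : ∀ A ∈ z, 1 ≤ crossNumber A := fun A hA => hS A (hz A hA)
  have hlt : ∃ A ∈ z, 1 < crossNumber A := by
    obtain ⟨A, hA, hA1⟩ := hne
    exact ⟨A, hA, (hge A hA).lt_of_ne' hA1⟩
  simpa [crossNumber_sum] using Multiset.sum_lt_sum hge hlt

lemma exists_isAtomSeq_crossNumber_ne_one (hS : (DeltaSet S).Nonempty) :
    ∃ W, IsAtomSeq S W ∧ crossNumber W ≠ 1 := by
  by_contra! hone
  obtain ⟨_, B, _, _, x, ⟨l, rfl, hl, hlB⟩, y, ⟨l', rfl, hl', hlB'⟩, hxy, _⟩ := hS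
  have hcard := crossNumber_sum_eq_card fun A hA => hone A (hl A hA)
  have hcard' := crossNumber_sum_eq_card fun A hA => hone A (hl' A hA)
  rw [hlB] at hcard
  rw [hlB', hcard] at hcard'
  exact hxy.ne (by exact_mod_cast hcard')

lemma IsLCNSet.exists_mem_deltaSet_le_card_sub_two (hS : IsLCNSet S)
    (hl : ∀ A ∈ l, IsAtomSeq S A) (hl1 : ∀ A ∈ l, crossNumber A = 1)
    (hz : ∀ A ∈ z, IsAtomSeq S A) (hz1 : ∃ A ∈ z, crossNumber A ≠ 1)
    (hz2 : 2 ≤ Multiset.card z) (hsum : z.sum = l.sum) :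
    ∃ d ∈ DeltaSet S, d ≤ Multiset.card l - 2 := by
  have hcard : Multiset.card z < Multiset.card l := by
    have h := hS.card_lt_crossNumber_sum hz hz1
    rw [hsum, crossNumber_sum_eq_card hl1] at h
    exact_mod_cast h
  obtain ⟨d, hd, hle⟩ :=
    exists_mem_deltaSet_le_sub ⟨z, rfl, hz, hsum⟩ ⟨l, rfl, hl, rfl⟩ hcard
  exact ⟨d, hd, by omega⟩

end CrossNumber

section UnitSequences

variable {G : Type*} [AddCommGroup G] {S : Set G} {g : G} {B W : Multiset G}

/-- The sequence `g ^ ord g`, an atom of cross number one when `g` has finite order (and the empty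
sequence otherwise). -/
noncomputable abbrev orderBlock (g : G) : Multiset G := Multiset.replicate (addOrderOf g) g

lemma isAtomSeq_orderBlock (hg : g ∈ S) (hfin : IsOfFinAddOrder g) :
    IsAtomSeq S (orderBlock g) := by
  have hpos := hfin.addOrderOf_pos
  refine ⟨⟨fun x hx => Multiset.eq_of_mem_replicate hx ▸ hg, by simp⟩,
    fun h0 => hpos.ne' (by simpa using congrArg Multiset.card h0), ?_⟩
  rintro A B hA - hA0 hB0 hAB
  obtain ⟨k, -, rfl⟩ := Multiset.le_replicate_iff.1 (hAB ▸ Multiset.le_add_right A B)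
  have hkpos : 0 < k := by simpa using Multiset.card_pos.2 hA0
  have hdvd : addOrderOf g ∣ k := addOrderOf_dvd_of_nsmul_eq_zero (by simpa using hA.2)
  have hBpos := Multiset.card_pos.2 hB0
  have hcard := congrArg Multiset.card hAB
  simp only [Multiset.card_replicate, Multiset.card_add] at hcard
  have := Nat.le_of_dvd hkpos hdvd
  omega

lemma crossNumber_orderBlock (hfin : IsOfFinAddOrder g) : crossNumber (orderBlock g) = 1 := by
  simp [crossNumber, hfin.addOrderOf_pos.ne']

/-- The submonoid of the sequences that are products of atoms over `S` of cross number one. -/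
def unitCrossMonoid (S : Set G) : AddSubmonoid (Multiset G) :=
  AddSubmonoid.closure {A | IsAtomSeq S A ∧ crossNumber A = 1}

lemma mem_unitCrossMonoid_iff : B ∈ unitCrossMonoid S ↔
    ∃ z : Multiset (Multiset G), (∀ A ∈ z, IsAtomSeq S A ∧ crossNumber A = 1) ∧ z.sum = B := by
  refine ⟨AddSubmonoid.exists_multiset_of_mem_closure, ?_⟩
  rintro ⟨z, hz, rfl⟩
  exact AddSubmonoid.multiset_sum_mem _ z fun A hA => AddSubmonoid.subset_closure (hz A hA)

lemma unitCrossMonoid_le_zeroSumMonoid : unitCrossMonoid S ≤ zeroSumMonoid S :=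
  AddSubmonoid.closure_le.2 fun _ hA => hA.1.1

lemma orderBlock_mem_unitCrossMonoid (hg : g ∈ S) (hfin : IsOfFinAddOrder g) :
    orderBlock g ∈ unitCrossMonoid S :=
  AddSubmonoid.subset_closure ⟨isAtomSeq_orderBlock hg hfin, crossNumber_orderBlock hfin⟩

lemma replicate_mem_closure_orderBlock {n : ℕ} (hg : g ∈ S) (hn : addOrderOf g ∣ n) :
    Multiset.replicate n g ∈ AddSubmonoid.closure (orderBlock '' S) := by
  obtain ⟨k, rfl⟩ := hn
  rw [mul_comm, ← Multiset.nsmul_replicate]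
  exact nsmul_mem (AddSubmonoid.subset_closure (Set.mem_image_of_mem _ hg)) k

lemma nsmul_mem_closure_orderBlock {n : ℕ} (hB : ∀ g ∈ B, g ∈ S)
    (hn : ∀ g ∈ B, addOrderOf g ∣ n) : n • B ∈ AddSubmonoid.closure (orderBlock '' S) := by
  rw [← Multiset.sum_map_singleton B, Multiset.smul_sum, Multiset.map_map]
  refine AddSubmonoid.multiset_sum_mem _ _ fun A hA => ?_
  obtain ⟨g, hg, rfl⟩ := Multiset.mem_map.1 hA
  simpa [Multiset.nsmul_singleton] using replicate_mem_closure_orderBlock (hB g hg) (hn g hg)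

lemma IsAtomSeq.crossNumber_eq_one_of_mem_unitCrossMonoid (hW : IsAtomSeq S W)
    (hmem : W ∈ unitCrossMonoid S) : crossNumber W = 1 := by
  obtain ⟨z, hz, rfl⟩ := mem_unitCrossMonoid_iff.1 hmem
  obtain ⟨A, hA⟩ := Multiset.exists_mem_of_ne_zero (show z ≠ 0 from fun h => hW.2.1 (by simp [h]))
  obtain ⟨hatom, hone⟩ := hz A hA
  rwa [← hW.eq_of_le hatom.1 hatom.2.1 (Multiset.le_sum_of_mem hA)]

lemma IsAtomSeq.count_le_addOrderOf [DecidableEq G] (hW : IsAtomSeq S W) (hg : g ∈ S)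
    (hfin : IsOfFinAddOrder g) : W.count g ≤ addOrderOf g := by
  by_contra! hlt
  have hblock := isAtomSeq_orderBlock hg hfin
  have heq := hW.eq_of_le hblock.1 hblock.2.1 (Multiset.le_count_iff_replicate_le.1 hlt.le)
  simp [← heq] at hlt

lemma IsLCNSet.exists_mem_deltaSet_le_finset_card_sub_two {S : Finset G}
    (hS : IsLCNSet (S : Set G)) (hfin : ∀ g ∈ S, IsOfFinAddOrder g)
    (hW : IsAtomSeq (S : Set G) W) (hW1 : crossNumber W ≠ 1) :
    ∃ d ∈ DeltaSet (S : Set G), d ≤ S.card - 2 := by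
  classical
  set l : Multiset (Multiset G) := S.val.map orderBlock with hl
  have hatom : ∀ A ∈ l, IsAtomSeq (S : Set G) A ∧ crossNumber A = 1 := by
    intro A hA
    obtain ⟨g, hg, rfl⟩ := Multiset.mem_map.1 hA
    exact ⟨isAtomSeq_orderBlock hg (hfin g hg), crossNumber_orderBlock (hfin g hg)⟩
  have hunit : l.sum ∈ unitCrossMonoid (S : Set G) := mem_unitCrossMonoid_iff.2 ⟨l, hatom, rfl⟩
  have hWl : W ≤ l.sum := by
    refine Multiset.le_iff_count.2 fun g => ?_
    by_cases hg : g ∈ W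
    · have hgS : g ∈ S := hW.1.1 g hg
      have hle : orderBlock g ≤ l.sum := Multiset.le_sum_of_mem (Multiset.mem_map_of_mem _ hgS)
      exact (hW.count_le_addOrderOf hgS (hfin g hgS)).trans
        (Multiset.le_count_iff_replicate_le.2 hle)
    · simp [Multiset.count_eq_zero_of_notMem hg]
  obtain ⟨V, hV⟩ := Multiset.le_iff_exists_add.1 hWl
  have hV0 : V ≠ 0 := by
    rintro rfl
    rw [hV, add_zero] at hunit
    exact hW1 (hW.crossNumber_eq_one_of_mem_unitCrossMonoid hunit)
  have hlzero : IsZeroSumSeq (S : Set G) (W + V) :=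
    hV ▸ unitCrossMonoid_le_zeroSumMonoid hunit
  obtain ⟨z, hz, rfl⟩ := (hlzero.of_add_left hW.1.2).exists_atoms_sum_eq
  have hzcard : 0 < Multiset.card z := Multiset.card_pos.2 fun h0 => hV0 (by simp [h0])
  simpa [hl] using hS.exists_mem_deltaSet_le_card_sub_two (z := W ::ₘ z)
    (fun A hA => (hatom A hA).1) (fun A hA => (hatom A hA).2)
    (Multiset.forall_mem_cons.2 ⟨hW, hz⟩) ⟨W, Multiset.mem_cons_self W z, hW1⟩
    (by rw [Multiset.card_cons]; omega) (by rw [Multiset.sum_cons, hV])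

end UnitSequences

section CriticalSets

variable {G : Type*} [AddCommGroup G] {S : Set G} {B W Y : Multiset G}

/-- `S` is critical if every atom over `S` of cross number different from one contains all elements
of `S`. A support-minimal atom of cross number different from one has a critical support. -/
def IsCritical (S : Set G) : Prop :=
  ∀ ⦃U : Multiset G⦄, IsAtomSeq S U → crossNumber U ≠ 1 → ∀ g ∈ S, g ∈ U

lemma exists_isCritical_finset (hW : IsAtomSeq S W) (hW1 : crossNumber W ≠ 1) :
    ∃ T : Finset G, (T : Set G) ⊆ S ∧ IsCritical (T : Set G) ∧
      ∃ U, IsAtomSeq (T : Set G) U ∧ crossNumber U ≠ 1 := by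
  classical
  let P (T : Finset G) : Prop :=
    (T : Set G) ⊆ S ∧ ∃ U, IsAtomSeq (T : Set G) U ∧ crossNumber U ≠ 1
  have hsub : ((W.toFinset : Finset G) : Set G) ⊆ S := fun g hg => hW.1.1 g (by simpa using hg)
  have hPW : P W.toFinset :=
    ⟨hsub, W, (isAtomSeq_iff_of_subset hsub).2 ⟨hW, by simp⟩, hW1⟩
  obtain ⟨T, -, hT⟩ := exists_minimal_le_of_wellFoundedLT P _ hPW
  refine ⟨T, hT.prop.1, fun U hU hU1 g hg => ?_, hT.prop.2⟩
  have hUT : U.toFinset ⊆ T := fun g hg => hU.1.1 g (by simpa using hg)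
  have hPU : P U.toFinset := ⟨(Finset.coe_subset.2 hUT).trans hT.prop.1, U,
    (isAtomSeq_iff_of_subset (Finset.coe_subset.2 hUT)).2 ⟨hU, by simp⟩, hU1⟩
  exact Multiset.mem_toFinset.1 (hT.le_of_le hPU hUT hg)

lemma IsCritical.mem_unitCrossMonoid_of_notMem (hS : IsCritical S) (hB : IsZeroSumSeq S B) {g : G}
    (hg : g ∈ S) (hgB : g ∉ B) : B ∈ unitCrossMonoid S := by
  obtain ⟨z, hz, rfl⟩ := hB.exists_atoms_sum_eq
  refine mem_unitCrossMonoid_iff.2 ⟨z, fun A hA => ⟨hz A hA, ?_⟩, rfl⟩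
  by_contra hA1
  exact hgB (Multiset.mem_of_le (Multiset.le_sum_of_mem hA) (hS (hz A hA) hA1 g hg))

lemma IsCritical.mem_unitCrossMonoid_of_dvd_count [DecidableEq G] (hS : IsCritical S)
    (hB : IsZeroSumSeq S B) {g : G} (hg : g ∈ S) (hfin : IsOfFinAddOrder g)
    (hdvd : addOrderOf g ∣ B.count g) : B ∈ unitCrossMonoid S := by
  have hsplit : Multiset.replicate (B.count g) g + B.filter (· ≠ g) = B := by
    rw [← Multiset.filter_eq', Multiset.filter_add_not]
  have hrep : Multiset.replicate (B.count g) g ∈ unitCrossMonoid S := by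
    obtain ⟨k, hk⟩ := hdvd
    rw [hk, mul_comm, ← Multiset.nsmul_replicate]
    exact nsmul_mem (orderBlock_mem_unitCrossMonoid hg hfin) k
  have hzero : IsZeroSumSeq S (B.filter (· ≠ g)) :=
    (hsplit.symm ▸ hB).of_add_left (unitCrossMonoid_le_zeroSumMonoid hrep).2
  rw [← hsplit]
  exact add_mem hrep (hS.mem_unitCrossMonoid_of_notMem hzero hg (by simp))

lemma two_mul_card_le_of_minimal_le_count_sum {α : Type*} [DecidableEq α] {a : α} {m : ℕ}
    {l : Multiset (Multiset α)} (hl : Minimal (fun l => m ≤ l.sum.count a) l)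
    (hlt : m < l.sum.count a) : 2 * Multiset.card l ≤ m + 1 := by
  have hcount (A) (hA : A ∈ l) : l.sum.count a = A.count a + (l.erase A).sum.count a := by
    rw [← Multiset.count_add, ← Multiset.sum_cons, Multiset.cons_erase hA]
  have herase (A) (hA : A ∈ l) : (l.erase A).sum.count a < m :=
    not_le.1 (hl.not_prop_of_lt (Multiset.erase_lt.2 hA))
  have htwo (A) (hA : A ∈ l) : 2 ≤ A.count a := by
    have := hcount A hA
    have := herase A hA
    omega
  obtain ⟨A, hA⟩ := Multiset.exists_mem_of_ne_zero
    (show l ≠ 0 by rintro rfl; simp at hlt)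
  have hrest : Multiset.card (l.erase A) * 2 ≤ (l.erase A).sum.count a := by
    rw [← Multiset.coe_countAddMonoidHom, map_multiset_sum]
    simpa using Multiset.card_nsmul_le_sum (s := (l.erase A).map (Multiset.count a)) (a := 2)
      (by simpa using fun A' hA' => htwo A' (Multiset.mem_of_mem_erase hA'))
  have := herase A hA
  have := Multiset.card_erase_add_one hA
  omega

lemma IsCritical.exists_mem_deltaSet_le_addOrderOf (hS : IsCritical S) (hLCN : IsLCNSet S) {h : G}
    (hh : h ∈ S) (hfin : IsOfFinAddOrder h) (hY : Y ∉ unitCrossMonoid S)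
    (hYh : Y + orderBlock h ∈ unitCrossMonoid S) :
    ∃ d ∈ DeltaSet S, d ≤ (addOrderOf h - 3) / 2 := by
  classical
  obtain ⟨l, hl, hlsum⟩ := mem_unitCrossMonoid_iff.1 hYh
  obtain ⟨I, hIl, hI⟩ := exists_minimal_le_of_wellFoundedLT
    (fun l : Multiset (Multiset G) => addOrderOf h ≤ l.sum.count h) l (by simp [hlsum])
  obtain ⟨J, rfl⟩ := Multiset.le_iff_exists_add.1 hIl
  obtain ⟨R, hR⟩ := Multiset.le_iff_exists_add.1 (Multiset.le_count_iff_replicate_le.1 hI.prop)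
  have hIatom (A) (hA : A ∈ I) := hl A (Multiset.mem_add.2 (Or.inl hA))
  have hJ : J.sum ∈ unitCrossMonoid S :=
    mem_unitCrossMonoid_iff.2 ⟨J, fun A hA => hl A (Multiset.mem_add.2 (Or.inr hA)), rfl⟩
  have hRY : R + J.sum = Y := by
    rw [Multiset.sum_add, hR, add_assoc, add_comm] at hlsum
    exact add_right_cancel hlsum
  have hRunit : R ∉ unitCrossMonoid S := fun hmem => hY (hRY ▸ add_mem hmem hJ)
  have hIzero : IsZeroSumSeq S (orderBlock h + R) :=
    hR ▸ (zeroSumMonoid S).multiset_sum_mem I fun A hA => (hIatom A hA).1.1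
  have hblock := isAtomSeq_orderBlock hh hfin
  obtain ⟨z, hz, rfl⟩ := (hIzero.of_add_left hblock.1.2).exists_atoms_sum_eq
  obtain ⟨A, hA, hA1⟩ : ∃ A ∈ z, crossNumber A ≠ 1 := by
    by_contra! hone
    exact hRunit (mem_unitCrossMonoid_iff.2 ⟨z, fun A hA => ⟨hz A hA, hone A hA⟩, rfl⟩)
  have hcount : addOrderOf h < I.sum.count h := by
    have hmem : h ∈ z.sum :=
      Multiset.mem_of_le (Multiset.le_sum_of_mem hA) (hS (hz A hA) hA1 h hh)
    simpa [hR] using Multiset.count_pos.2 hmem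
  have hcard := two_mul_card_le_of_minimal_le_count_sum hI hcount
  have hzcard := Multiset.card_pos_iff_exists_mem.2 ⟨A, hA⟩
  obtain ⟨d, hd, hle⟩ := hLCN.exists_mem_deltaSet_le_card_sub_two (z := orderBlock h ::ₘ z)
    (fun A hA => (hIatom A hA).1) (fun A hA => (hIatom A hA).2)
    (Multiset.forall_mem_cons.2 ⟨hblock, hz⟩) ⟨A, Multiset.mem_cons_of_mem hA, hA1⟩
    (by rw [Multiset.card_cons]; omega) (by rw [Multiset.sum_cons, hR])
  exact ⟨d, hd, by omega⟩

end CriticalSets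

section DifferenceClosure

lemma exists_notMem_add_mem_of_mem_closure {A : Type*} [AddMonoid A] {M X : Set A} {c y : A}
    (hc : c ∈ AddSubmonoid.closure X) (hy : y ∉ M) (hyc : y + c ∈ M) :
    ∃ x ∈ X, ∃ y', y' ∉ M ∧ y' + x ∈ M := by
  induction hc using AddSubmonoid.closure_induction generalizing y with
  | mem x hx => exact ⟨x, hx, y, hy, hyc⟩
  | zero => exact absurd (add_zero y ▸ hyc) hy
  | add c d _ _ ihc ihd =>
    by_cases hmem : y + c ∈ M
    · exact ihc hy hmem
    · exact ihd hmem (add_assoc y c d ▸ hyc)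

variable {A : Type*} [AddCommMonoid A] {M : AddSubmonoid A} {b c : A}

/-- The elements that land in `M` after adding some element of `M`. In a cancellative monoid these
are the elements of the subgroup generated by `M` inside the group of differences. -/
def differenceClosure (M : AddSubmonoid A) : AddSubmonoid A where
  carrier := {b | ∃ c ∈ M, b + c ∈ M}
  zero_mem' := ⟨0, M.zero_mem, by simp⟩
  add_mem' := by
    rintro a b ⟨c, hc, hac⟩ ⟨d, hd, hbd⟩
    exact ⟨c + d, M.add_mem hc hd, add_add_add_comm a c b d ▸ M.add_mem hac hbd⟩

lemma le_differenceClosure : M ≤ differenceClosure M :=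
  fun b hb => ⟨b, hb, M.add_mem hb hb⟩

lemma mem_differenceClosure_of_add_mem (hc : c ∈ differenceClosure M)
    (hbc : b + c ∈ differenceClosure M) : b ∈ differenceClosure M := by
  obtain ⟨d, hd, hcd⟩ := hc
  obtain ⟨e, he, hbce⟩ := hbc
  refine ⟨(c + d) + e, M.add_mem hcd he, ?_⟩
  have heq : b + (c + d + e) = (b + c + e) + d := by abel
  exact heq ▸ M.add_mem hbce hd

lemma mem_differenceClosure_of_forall_prime
    (h : ∀ p : ℕ, p.Prime → ∃ m : ℕ, ¬ p ∣ m ∧ m • b ∈ differenceClosure M) :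
    b ∈ differenceClosure M := by
  let N : AddSubmonoid ℕ := (differenceClosure M).comap (multiplesHom A b)
  have hgcd : Nat.setGcd (N : Set ℕ) = 1 := by
    refine Nat.eq_one_iff_not_exists_prime_dvd.2 fun p hp hdvd => ?_
    obtain ⟨m, hpm, hm⟩ := h p hp
    exact hpm (Nat.dvd_setGcd_iff.1 hdvd m hm)
  obtain ⟨k, hk⟩ := Nat.exists_mem_closure_of_ge (N : Set ℕ)
  have hN (m : ℕ) (hm : k ≤ m) : m • b ∈ differenceClosure M := by
    have hmem := hk m hm (hgcd ▸ one_dvd m)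
    rwa [AddSubmonoid.closure_eq] at hmem
  exact mem_differenceClosure_of_add_mem (hN k le_rfl) (succ_nsmul' b k ▸ hN (k + 1) k.le_succ)

end DifferenceClosure

section Rank

variable {G : Type*} [AddCommGroup G]

instance finite_modN [Finite G] (n : ℕ) : Finite (ModN G n) :=
  Finite.of_surjective _ (Submodule.mkQ_surjective _)

lemma natCard_modN_eq_natCard_torsion [Finite G] (n : ℕ) :
    Nat.card (ModN G n) = Nat.card {x : G // n • x = 0} := by
  let f : G →+ G := (LinearMap.lsmul ℤ G n).toAddMonoidHom
  have hker (x : G) : x ∈ f.ker ↔ n • x = 0 := by simp [f, AddMonoidHom.mem_ker]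
  calc Nat.card (ModN G n) = f.range.index := rfl
    _ = Nat.card f.ker := AddSubgroup.index_range
    _ = Nat.card {x : G // n • x = 0} := Nat.card_congr (Equiv.subtypeEquivRight hker)

lemma finrank_modN_eq_pRank [Finite G] (p : ℕ) [hp : Fact p.Prime] :
    Module.finrank (ZMod p) (ModN G p) = pRank G p := by
  rw [pRank, ← natCard_modN_eq_natCard_torsion,
    Module.natCard_eq_pow_finrank (K := ZMod p) (V := ModN G p), Nat.card_zmod,
    Nat.log_pow hp.out.one_lt]

lemma pRank_addSubgroup_le [Finite G] (H : AddSubgroup G) (p : ℕ) : pRank H p ≤ pRank G p := by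
  refine Nat.log_mono_right (Nat.card_le_card_of_injective
    (fun x => ⟨x.1, congrArg Subtype.val x.2⟩) fun x y hxy => ?_)
  exact Subtype.ext (Subtype.ext (Subtype.mk.inj hxy))

lemma pRank_le_rankG [Finite G] {p : ℕ} (hp : p.Prime) : pRank G p ≤ rankG G := by
  refine le_csSup ⟨Nat.card G, ?_⟩ ⟨p, hp, rfl⟩
  rintro _ ⟨q, _, rfl⟩
  exact (Nat.log_le_self _ _).trans (Finite.card_subtype_le _)

lemma exists_multiset_sum_eq_of_mem_closure [Finite G] {T : Set G} {x : G}
    (hx : x ∈ AddSubgroup.closure T) : ∃ X : Multiset G, (∀ t ∈ X, t ∈ T) ∧ X.sum = x := by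
  rw [← AddSubgroup.mem_toAddSubmonoid, AddSubgroup.closure_toAddSubmonoid_of_finite] at hx
  exact AddSubmonoid.exists_multiset_of_mem_closure hx

lemma exists_sum_nsmul_eq_nsmul [Finite G] {ι : Type*} [Fintype ι] {p : ℕ} (hp : p.Prime)
    (v : ι → G) (hι : pRank G p < Fintype.card ι) :
    ∃ c : ι → ℕ, (∃ i, ¬ p ∣ c i) ∧ ∃ y, ∑ i, c i • v i = p • y := by
  have : Fact p.Prime := ⟨hp⟩
  have hdep : ¬ LinearIndependent (ZMod p) fun i => ModN.mkQ p (v i) := fun hli =>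
    (hli.fintype_card_le_finrank.trans_eq (finrank_modN_eq_pRank p)).not_gt hι
  obtain ⟨c, hc, i, hi⟩ := Fintype.not_linearIndependent_iff.1 hdep
  refine ⟨fun i => (c i).val, ⟨i, fun hdvd => hi ?_⟩, ?_⟩
  · rw [← ZMod.natCast_zmod_val (c i), (ZMod.natCast_eq_zero_iff _ _).2 hdvd]
  · have hzero : ModN.mkQ p (∑ i, (c i).val • v i) = 0 := by
      rw [map_sum, ← hc]
      refine Finset.sum_congr rfl fun i _ => ?_
      rw [_root_.map_nsmul, ← Nat.cast_smul_eq_nsmul (ZMod p), ZMod.natCast_zmod_val]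
    obtain ⟨y, hy⟩ := (Submodule.Quotient.mk_eq_zero _).1 hzero
    exact ⟨y, by simpa using hy.symm⟩

lemma exists_isZeroSumSeq_not_dvd_count [Finite G] [DecidableEq G] {T : Finset G} {p : ℕ}
    (hp : p.Prime) (hT : pRank G p < T.card) :
    ∃ Z : Multiset G, IsZeroSumSeq (T : Set G) Z ∧ ∃ h ∈ T, ¬ p ∣ Z.count h := by
  let H := AddSubgroup.closure (T : Set G)
  let v (t : T) : H := ⟨t, AddSubgroup.subset_closure t.2⟩
  obtain ⟨c, ⟨h, hph⟩, y, hy⟩ := exists_sum_nsmul_eq_nsmul hp v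
    (by simpa using (pRank_addSubgroup_le H p).trans_lt hT)
  obtain ⟨X, hXT, hX⟩ := exists_multiset_sum_eq_of_mem_closure (neg_mem y.2)
  have hsum : ∑ t, c t • (t : G) = p • (y : G) := by
    simpa [v] using congrArg Subtype.val hy
  refine ⟨∑ t : T, Multiset.replicate (c t) (t : G) + p • X, ⟨fun x hx => ?_, ?_⟩, h, h.2, ?_⟩
  · rcases Multiset.mem_add.1 hx with hx | hx
    · obtain ⟨t, _, ht⟩ := Multiset.mem_sum.1 hx
      exact Multiset.eq_of_mem_replicate ht ▸ t.2
    · exact hXT x (Multiset.mem_of_mem_nsmul hx)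
  · rw [Multiset.sum_add, Multiset.sum_sum, Multiset.sum_nsmul, hX]
    simpa [sub_eq_zero, ← sub_eq_add_neg] using hsum
  · have hcount : (∑ t : T, Multiset.replicate (c t) (t : G)).count (h : G) = c h := by
      simp [Multiset.count_sum', Multiset.count_replicate]
    rwa [Multiset.count_add, Multiset.count_nsmul, hcount, Nat.dvd_add_left (dvd_mul_right p _)]

lemma IsCritical.mem_differenceClosure_unitCrossMonoid [Finite G] {S : Finset G}
    (hS : IsCritical (S : Set G)) (hrank : ∀ p : ℕ, p.Prime → pRank G p + 2 ≤ S.card)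
    {W : Multiset G} (hW : IsZeroSumSeq (S : Set G) W) :
    W ∈ differenceClosure (unitCrossMonoid (S : Set G)) := by
  classical
  refine mem_differenceClosure_of_forall_prime fun p hp => ?_
  have hcard := hrank p hp
  obtain ⟨g, hg⟩ : S.Nonempty := Finset.card_pos.1 (by omega)
  obtain ⟨Z, hZ, h, hh, hpZ⟩ := exists_isZeroSumSeq_not_dvd_count hp
    (show pRank G p < (S.erase g).card by rw [Finset.card_erase_of_mem hg]; omega)
  have hZS : IsZeroSumSeq (S : Set G) Z := hZ.mono (by simp)
  have hZunit : Z ∈ unitCrossMonoid (S : Set G) :=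
    hS.mem_unitCrossMonoid_of_notMem hZS hg fun hgZ => by simpa using hZ.1 g hgZ
  have hhS : h ∈ S := Finset.mem_of_mem_erase hh
  set m := Z.count h
  set k := W.count h * (addOrderOf h - 1)
  have hWZ : IsZeroSumSeq (S : Set G) (m • W + k • Z) :=
    (zeroSumMonoid _).add_mem (nsmul_mem (S := zeroSumMonoid (S : Set G)) hW m)
      (nsmul_mem (S := zeroSumMonoid (S : Set G)) hZS k)
  have hcount : (m • W + k • Z).count h = addOrderOf h * (m * W.count h) := by
    have hpos := Nat.sub_add_cancel (addOrderOf_pos h)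
    rw [Multiset.count_add, Multiset.count_nsmul, Multiset.count_nsmul]
    conv_rhs => rw [← hpos]
    simp only [k, m]
    ring
  exact ⟨m, hpZ, k • Z, nsmul_mem hZunit k, hS.mem_unitCrossMonoid_of_dvd_count hWZ hhS
    (isOfFinAddOrder_of_finite h) (hcount ▸ dvd_mul_right _ _)⟩

lemma IsCritical.exists_mem_deltaSet_le_exponent [Finite G] {S : Finset G}
    (hS : IsCritical (S : Set G)) (hLCN : IsLCNSet (S : Set G))
    (hrank : ∀ p : ℕ, p.Prime → pRank G p + 2 ≤ S.card)
    {W : Multiset G} (hW : IsAtomSeq (S : Set G) W) (hW1 : crossNumber W ≠ 1) :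
    ∃ d ∈ DeltaSet (S : Set G), d ≤ (AddMonoid.exponent G - 3) / 2 := by
  set n := AddMonoid.exponent G
  have hn : n ≠ 0 := AddMonoid.exponent_ne_zero_of_finite
  have hWunit : W ∉ unitCrossMonoid (S : Set G) :=
    fun hmem => hW1 (hW.crossNumber_eq_one_of_mem_unitCrossMonoid hmem)
  obtain ⟨C, hC, hWC⟩ := hS.mem_differenceClosure_unitCrossMonoid hrank hW.1
  have hWnC : W + n • C ∈ unitCrossMonoid (S : Set G) := by
    have heq : W + n • C = (W + C) + (n - 1) • C := by
      rw [add_assoc, ← succ_nsmul', Nat.sub_one_add_one hn]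
    exact heq ▸ add_mem hWC (nsmul_mem hC _)
  have hnC : n • C ∈ AddSubmonoid.closure (orderBlock '' (S : Set G)) :=
    nsmul_mem_closure_orderBlock (unitCrossMonoid_le_zeroSumMonoid hC).1
      fun g _ => AddMonoid.addOrder_dvd_exponent g
  obtain ⟨_, ⟨h, hh, rfl⟩, Y, hY, hYh⟩ :=
    exists_notMem_add_mem_of_mem_closure (M := unitCrossMonoid (S : Set G)) hnC hWunit hWnC
  obtain ⟨d, hd, hle⟩ :=
    hS.exists_mem_deltaSet_le_addOrderOf hLCN hh (isOfFinAddOrder_of_finite h) hY hYh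
  have hord := Nat.le_of_dvd (Nat.pos_of_ne_zero hn) (AddMonoid.addOrder_dvd_exponent h)
  exact ⟨d, hd, hle.trans (by gcongr)⟩

end Rank

theorem stmt_12_general {G : Type*} [AddCommGroup G] [Finite G] {G₀ : Set G}
    (hne : (DeltaSet G₀).Nonempty) (hG₀ : IsLCNSet G₀) :
    sInf (DeltaSet G₀) ≤ max (rankG G - 1) ((AddMonoid.exponent G - 3) / 2) := by
  obtain ⟨W₀, hW₀, hW₀1⟩ := exists_isAtomSeq_crossNumber_ne_one hne
  obtain ⟨S, hSG₀, hS, W, hW, hW1⟩ := exists_isCritical_finset hW₀ hW₀1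
  have hLCN : IsLCNSet (S : Set G) := hG₀.mono hSG₀
  obtain ⟨d, hd, hle⟩ : ∃ d ∈ DeltaSet (S : Set G),
      d ≤ max (rankG G - 1) ((AddMonoid.exponent G - 3) / 2) := by
    by_cases hcard : rankG G + 2 ≤ S.card
    · have hrank (p : ℕ) (hp : p.Prime) : pRank G p + 2 ≤ S.card :=
        (Nat.add_le_add_right (pRank_le_rankG hp) 2).trans hcard
      obtain ⟨d, hd, hle⟩ := hS.exists_mem_deltaSet_le_exponent hLCN hrank hW hW1
      exact ⟨d, hd, le_max_of_le_right hle⟩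
    · obtain ⟨d, hd, hle⟩ := hLCN.exists_mem_deltaSet_le_finset_card_sub_two
        (fun g _ => isOfFinAddOrder_of_finite g) hW hW1
      exact ⟨d, hd, le_max_of_le_left (by omega)⟩
  exact (Nat.sInf_le (deltaSet_mono hSG₀ hd)).trans hle

/-- If `exp(G) = n ≥ 5` and `r(G) ≤ n − 3`, then every non-half-factorial
LCN-set `G₀ ⊆ G` satisfies `min Δ(G₀) ≤ n − 4`. -/
theorem stmt_12 {G : Type*} [AddCommGroup G] [Fintype G]
    (h5 : 5 ≤ AddMonoid.exponent G) (hr : rankG G ≤ AddMonoid.exponent G - 3) :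
    ∀ G₀ : Set G, (DeltaSet G₀).Nonempty → IsLCNSet G₀ →
      sInf (DeltaSet G₀) ≤ AddMonoid.exponent G - 4 :=
  fun _ hne hG₀ => (stmt_12_general hne hG₀).trans (by omega)
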